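/- Fix ν and λ with λ ∈ (0, 1/2) and ν ≥ 1/2 − λ, and let h(x) = I_{ν−1}(x)/I_ν(x). There exists a unique B > 0 such that the function L(x) = (ν − 1/2 − λ + √(B + x²))/x satisfies h(x) ≥ L(x) for all x > 0 with equality for at least one x > 0; moreover the equality holds at exactly one point x* > 0, and at this point h′(x*) = L′(x*). Writing B = B(λ) and x* = x*(λ) for this fixed ν, the function B(λ) is increasing and x*(λ) is decreasing on (0, 1/2), and lim_{λ→0⁺} B(λ) = ν² − 1/4, lim_{λ→1/2⁻} B(λ) = (ν + 1)², lim_{λ→0⁺} x*(λ) = +∞, lim_{λ→1/2⁻} x*(λ) = 0. -/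

import Mathlib

open Set Filter

/-- The modified Bessel function of the first kind,
`I_ν(x) = ∑_{k=0}^∞ (x/2)^{2k+ν} / (k! Γ(k+ν+1))`
(here `1/Γ` vanishes at nonpositive integer arguments, since `Real.Gamma` is `0` there). -/
noncomputable def besselI (ν x : ℝ) : ℝ :=
  ∑' k : ℕ, (x / 2) ^ (2 * (k : ℝ) + ν) / ((Nat.factorial k : ℝ) * Real.Gamma ((k : ℝ) + ν + 1))

/-- The ratio `h(x) = I_{ν-1}(x)/I_ν(x)`. -/
noncomputable def ratioI (ν : ℝ) : ℝ → ℝ := fun x => besselI (ν - 1) x / besselI ν x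

/-- The candidate lower bound `L(x) = (ν - 1/2 - λ + √(B + x²))/x`. -/
noncomputable def lowI (ν lam B : ℝ) : ℝ → ℝ := fun x =>
  (ν - 1 / 2 - lam + Real.sqrt (B + x ^ 2)) / x

/-- `B > 0`, `L` is a lower bound for `h` on `(0,∞)`, and the bound is attained somewhere. -/
def TouchesBelowI (ν lam B : ℝ) : Prop :=
  0 < B ∧ (∀ x > 0, lowI ν lam B x ≤ ratioI ν x) ∧ ∃ x > 0, ratioI ν x = lowI ν lam B x

/-- The touching point `x*` is unique and the graphs are tangent there. -/
def TangentBelowI (ν lam B xs : ℝ) : Prop :=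
  0 < xs ∧ ratioI ν xs = lowI ν lam B xs ∧
    (∀ x > 0, ratioI ν x = lowI ν lam B x → x = xs) ∧
    deriv (ratioI ν) xs = deriv (lowI ν lam B) xs


/-!
The function `v(x) = x I_ν'(x) / I_ν(x)` satisfies `x h(x) = v(x) + ν` and the Riccati equation
`x v' = D` with `D = x ^ 2 + ν ^ 2 - v ^ 2 > 0`. Hence `L(x) ≤ h(x)` means `B ≤ F_λ(x)` with
`F_λ = (v + 1 / 2 + λ) ^ 2 - x ^ 2`, and the optimal `B` is the minimum of `F_λ`. Now
`F_λ' = 2 (D / x) (λ - τ)` with `τ = x ^ 2 / D - v - 1 / 2`, so everything follows once `τ`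
decreases strictly from `τ(0⁺) = 1 / 2` as long as it is positive: `F_λ` is then minimal exactly at
the point where `τ = λ`.

The quantity `T = -x τ'` satisfies a linear equation, with integrating factor `(D / x) ^ 2 I_ν ^ 2`,
whose source term has the sign of `τ`; so `T > 0` up to the first zero of `τ`. At a zero of `τ` one
has `(v - 1 / 2) T = 1 / 4 - ν ^ 2` with `v > 1 / 2`: such a zero exists only for `ν < 1 / 2`, and
`τ` cannot become positive again after it.
-/

open scoped Topology

section Calculus

variable {f f' : ℝ → ℝ} {a b c : ℝ}

lemma lt_of_tendsto_nhdsGT_of_hasDerivAt_pos (hab : a < b)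
    (hf : ∀ x ∈ Ioc a b, HasDerivAt f (f' x) x) (hlim : Tendsto f (𝓝[>] a) (𝓝 c))
    (hf' : ∀ x ∈ Ioo a b, 0 < f' x) : c < f b := by
  have hmono : StrictMonoOn f (Ioc a b) := by
    refine strictMonoOn_of_deriv_pos (convex_Ioc a b)
      (fun x hx => (hf x hx).continuousAt.continuousWithinAt) fun x hx => ?_
    rw [interior_Ioc] at hx
    rw [(hf x ⟨hx.1, hx.2.le⟩).deriv]
    exact hf' x hx
  obtain ⟨m, ham, hmb⟩ := exists_between hab
  have hcm : c ≤ f m := by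
    refine le_of_tendsto hlim ?_
    filter_upwards [Ioo_mem_nhdsGT ham] with x hx
    exact (hmono ⟨hx.1, (hx.2.trans hmb).le⟩ ⟨ham, hmb.le⟩ hx.2).le
  exact hcm.trans_lt (hmono ⟨ham, hmb.le⟩ ⟨hab, le_rfl⟩ hmb)

lemma exists_first_zero (hab : a < b) (hf : ContinuousOn f (Ioc a b))
    (hpos : ∀ᶠ x in 𝓝[>] a, 0 < f x) (hb : f b ≤ 0) :
    ∃ x₀ ∈ Ioc a b, f x₀ = 0 ∧ ∀ x ∈ Ioo a x₀, 0 < f x := by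
  obtain ⟨m, ham, hm⟩ := mem_nhdsGT_iff_exists_Ioc_subset.mp hpos
  have hmb : m < b := not_le.mp fun h => (hm ⟨hab, h⟩).not_ge hb
  have hcont : ContinuousOn f (Icc m b) := hf.mono (Icc_subset_Ioc ham le_rfl)
  have hcompact : IsCompact (Icc m b ∩ f ⁻¹' Iic 0) :=
    isCompact_Icc.of_isClosed_subset (hcont.preimage_isClosed_of_isClosed isClosed_Icc isClosed_Iic)
      inter_subset_left
  obtain ⟨x₀, ⟨hx₀, hfx₀⟩, hleast⟩ := hcompact.exists_isLeast ⟨b, ⟨hmb.le, le_rfl⟩, hb⟩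
  have hax₀ : a < x₀ := lt_of_lt_of_le ham hx₀.1
  have hbefore : ∀ x ∈ Ioo a x₀, 0 < f x := by
    intro x hx
    rcases le_total x m with hxm | hmx
    · exact hm ⟨hx.1, hxm⟩
    · exact not_le.mp fun h => (hleast ⟨⟨hmx, hx.2.le.trans hx₀.2⟩, h⟩).not_gt hx.2
  refine ⟨x₀, ⟨hax₀, hx₀.2⟩, le_antisymm hfx₀ ?_, hbefore⟩
  have hleft : Tendsto f (𝓝[Ioo a x₀] x₀) (𝓝 (f x₀)) :=
    (hf x₀ ⟨hax₀, hx₀.2⟩).mono (Ioo_subset_Ioc_self.trans (Ioc_subset_Ioc_right hx₀.2))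
  rw [nhdsWithin_Ioo_eq_nhdsLT hax₀] at hleft
  exact ge_of_tendsto hleft (eventually_of_mem (Ioo_mem_nhdsLT hax₀) fun x hx => (hbefore x hx).le)

end Calculus

lemma inv_Gamma_eq_mul_inv_Gamma_add_one (s : ℝ) :
    (Real.Gamma s)⁻¹ = s * (Real.Gamma (s + 1))⁻¹ := by
  rcases eq_or_ne s 0 with rfl | hs
  · simp [Real.Gamma_zero]
  · rw [Real.Gamma_add_one hs, mul_inv, mul_inv_cancel_left₀ hs]

/-- The coefficient of `t ^ k` in the Bessel–Clifford function of order `ν`. -/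
noncomputable def cliffordCoeff (ν : ℝ) (k : ℕ) : ℝ :=
  ((k.factorial : ℝ) * Real.Gamma (k + ν + 1))⁻¹

/-- The Bessel–Clifford function `C_ν(t) = ∑ t ^ k / (k! Γ(k + ν + 1))`, the entire function with
`I_ν(x) = (x / 2) ^ ν C_ν(x ^ 2 / 4)`. -/
noncomputable def besselClifford (ν t : ℝ) : ℝ := ∑' k : ℕ, cliffordCoeff ν k * t ^ k

section Clifford

variable {ν : ℝ}

lemma cliffordCoeff_pos (hν : -1 < ν) (k : ℕ) : 0 < cliffordCoeff ν k := by
  have : 0 < Real.Gamma (k + ν + 1) :=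
    Real.Gamma_pos_of_pos (by linarith [k.cast_nonneg (α := ℝ)])
  unfold cliffordCoeff
  positivity

lemma add_one_mul_cliffordCoeff_add_one (ν : ℝ) (k : ℕ) :
    ((k + 1 : ℕ) : ℝ) * cliffordCoeff ν (k + 1) = cliffordCoeff (ν + 1) k := by
  have hk : ((k + 1 : ℕ) : ℝ) ≠ 0 := by positivity
  unfold cliffordCoeff
  rw [show ((k + 1 : ℕ) : ℝ) + ν + 1 = k + (ν + 1) + 1 by push_cast; ring, Nat.factorial_succ,
    Nat.cast_mul, mul_assoc, mul_inv, mul_inv_cancel_left₀ hk]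

lemma cliffordCoeff_eq_mul (ν : ℝ) (k : ℕ) :
    cliffordCoeff ν k = (k + ν + 1) * cliffordCoeff (ν + 1) k := by
  unfold cliffordCoeff
  rw [mul_inv, inv_Gamma_eq_mul_inv_Gamma_add_one (k + ν + 1), mul_inv, ← add_assoc (k : ℝ) ν 1]
  ring

lemma cliffordCoeff_add_one_div {k : ℕ} (hk : 0 < k + ν + 1) :
    cliffordCoeff ν (k + 1) / cliffordCoeff ν k = ((k : ℝ) + 1)⁻¹ * (k + ν + 1)⁻¹ := by
  have hc : cliffordCoeff ν k ≠ 0 := by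
    have := Real.Gamma_pos_of_pos hk
    unfold cliffordCoeff
    positivity
  have hrec : cliffordCoeff ν k = (k + ν + 1) * ((k + 1 : ℕ) * cliffordCoeff ν (k + 1)) := by
    rw [add_one_mul_cliffordCoeff_add_one, ← cliffordCoeff_eq_mul]
  rw [div_eq_iff hc, hrec]
  push_cast
  field_simp

lemma summable_cliffordCoeff_mul_pow (ν t : ℝ) : Summable fun k => cliffordCoeff ν k * t ^ k := by
  rcases eq_or_ne t 0 with rfl | ht
  · exact summable_of_ne_finset_zero (s := {0}) fun k hk => by
      simp [Finset.notMem_singleton.mp hk]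
  have hcast : Tendsto (fun k : ℕ => (k : ℝ)) atTop atTop := tendsto_natCast_atTop_atTop
  have hpos : ∀ᶠ k : ℕ in atTop, 0 < k + ν + 1 :=
    ((tendsto_atTop_add_const_right _ ν hcast).eventually_gt_atTop (-1)).mono
      fun k hk => by linarith
  have hratio : Tendsto (fun k : ℕ => ((k : ℝ) + 1)⁻¹ * (k + ν + 1)⁻¹ * |t|) atTop (𝓝 0) := by
    have h₁ := (tendsto_atTop_add_const_right _ (1 : ℝ) hcast).inv_tendsto_atTop
    have h₂ := (tendsto_atTop_add_const_right _ (1 : ℝ)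
      (tendsto_atTop_add_const_right _ ν hcast)).inv_tendsto_atTop
    simpa using (h₁.mul h₂).mul_const |t|
  refine summable_of_ratio_test_tendsto_lt_one one_pos ?_ (hratio.congr' ?_)
  · filter_upwards [hpos] with k hk
    have := Real.Gamma_pos_of_pos hk
    unfold cliffordCoeff
    positivity
  · filter_upwards [hpos] with k hk
    have hk' : 0 ≤ ((k : ℝ) + 1)⁻¹ * (k + ν + 1)⁻¹ := by positivity
    rw [← norm_div, mul_div_mul_comm, cliffordCoeff_add_one_div hk, pow_succ,
      mul_div_cancel_left₀ _ (pow_ne_zero k ht), norm_mul, Real.norm_of_nonneg hk',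
      Real.norm_eq_abs]

lemma hasSum_besselClifford (ν t : ℝ) :
    HasSum (fun k => cliffordCoeff ν k * t ^ k) (besselClifford ν t) :=
  (summable_cliffordCoeff_mul_pow ν t).hasSum

lemma hasSum_natCast_mul_cliffordCoeff (ν t : ℝ) :
    HasSum (fun k : ℕ => (k : ℝ) * cliffordCoeff ν k * t ^ (k - 1)) (besselClifford (ν + 1) t) := by
  rw [← hasSum_nat_add_iff' 1]
  simpa only [Finset.sum_range_one, Nat.cast_zero, zero_mul, sub_zero, Nat.add_sub_cancel,
    add_one_mul_cliffordCoeff_add_one] using hasSum_besselClifford (ν + 1) t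

lemma besselClifford_pos (hν : -1 < ν) {t : ℝ} (ht : 0 ≤ t) : 0 < besselClifford ν t :=
  (summable_cliffordCoeff_mul_pow ν t).tsum_pos
    (fun k => mul_nonneg (cliffordCoeff_pos hν k).le (pow_nonneg ht k)) 0
    (by simpa using cliffordCoeff_pos hν 0)

lemma besselClifford_zero_right (ν : ℝ) : besselClifford ν 0 = cliffordCoeff ν 0 := by
  unfold besselClifford
  rw [tsum_eq_single 0 fun k hk => by simp [hk], pow_zero, mul_one]

lemma hasDerivAt_besselClifford (ν t : ℝ) :
    HasDerivAt (besselClifford ν) (besselClifford (ν + 1) t) t := by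
  have hbound : Summable fun k : ℕ => |(k : ℝ) * cliffordCoeff ν k * (|t| + 1) ^ (k - 1)| :=
    (hasSum_natCast_mul_cliffordCoeff ν (|t| + 1)).summable.abs
  have hderiv := hasDerivAt_tsum_of_isPreconnected
    (g := fun k s => cliffordCoeff ν k * s ^ k)
    (g' := fun k s => (k : ℝ) * cliffordCoeff ν k * s ^ (k - 1))
    (t := Metric.ball (0 : ℝ) (|t| + 1)) (y₀ := 0) (y := t) hbound
    Metric.isOpen_ball (convex_ball _ _).isPreconnected
    (fun k s _ => ((hasDerivAt_pow k s).const_mul _).congr_deriv (by ring))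
    (fun k s hs => by
      have hs' : |s| ≤ |(|t| + 1)| := (mem_ball_zero_iff.mp hs).le.trans (le_abs_self _)
      rw [Real.norm_eq_abs, abs_mul _ (s ^ _), abs_mul _ ((|t| + 1) ^ _), abs_pow, abs_pow]
      gcongr)
    (Metric.mem_ball_self (by positivity)) (summable_cliffordCoeff_mul_pow ν 0)
    (mem_ball_zero_iff.mpr (lt_add_one |t|))
  rwa [(hasSum_natCast_mul_cliffordCoeff ν t).tsum_eq] at hderiv

lemma besselClifford_eq_add (ν t : ℝ) :
    besselClifford ν t = (ν + 1) * besselClifford (ν + 1) t + t * besselClifford (ν + 2) t := by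
  have h₁ := (summable_cliffordCoeff_mul_pow (ν + 1) t).hasSum.mul_left (ν + 1)
  have h₂ := (hasSum_natCast_mul_cliffordCoeff (ν + 1) t).mul_left t
  rw [add_assoc, one_add_one_eq_two] at h₂
  refine HasSum.tsum_eq ((h₁.add h₂).congr_fun fun k => ?_)
  rw [cliffordCoeff_eq_mul]
  rcases k with _ | k
  · simp
  · rw [Nat.add_sub_cancel, pow_succ]
    ring

end Clifford

section BesselI

variable {ν x : ℝ}

lemma besselI_eq_rpow_mul_besselClifford (ν : ℝ) (hx : 0 < x) :
    besselI ν x = (x / 2) ^ ν * besselClifford ν (x ^ 2 / 4) := by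
  unfold besselI besselClifford
  rw [← tsum_mul_left]
  refine tsum_congr fun k => ?_
  rw [Real.rpow_add (by positivity), Real.rpow_mul (by positivity), Real.rpow_natCast,
    Real.rpow_ofNat, div_pow, cliffordCoeff]
  ring

lemma besselI_pos (hν : -1 < ν) (hx : 0 < x) : 0 < besselI ν x := by
  rw [besselI_eq_rpow_mul_besselClifford ν hx]
  have := besselClifford_pos hν (by positivity : 0 ≤ x ^ 2 / 4)
  positivity

lemma besselI_sub_one (ν : ℝ) (hx : 0 < x) :
    besselI (ν - 1) x = 2 * ν / x * besselI ν x + besselI (ν + 1) x := by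
  have hx₂ : x / 2 ≠ 0 := by positivity
  simp only [besselI_eq_rpow_mul_besselClifford _ hx, besselClifford_eq_add (ν - 1),
    Real.rpow_sub_one hx₂, Real.rpow_add_one hx₂]
  rw [sub_add_cancel, show ν - 1 + 2 = ν + 1 by ring]
  field_simp
  ring

lemma hasDerivAt_besselI (ν : ℝ) (hx : 0 < x) :
    HasDerivAt (besselI ν) (besselI (ν + 1) x + ν / x * besselI ν x) x := by
  have hpow : HasDerivAt (fun y : ℝ => (y / 2) ^ ν) (1 / 2 * ν * (x / 2) ^ (ν - 1)) x :=
    ((hasDerivAt_id x).div_const 2).rpow_const (Or.inl (by positivity))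
  have hsq : HasDerivAt (fun y : ℝ => y ^ 2 / 4) (x / 2) x :=
    ((hasDerivAt_pow 2 x).div_const 4).congr_deriv (by push_cast; ring)
  have hprod := hpow.mul ((hasDerivAt_besselClifford ν (x ^ 2 / 4)).comp x hsq)
  refine (hprod.congr_of_eventuallyEq ?_).congr_deriv ?_
  · filter_upwards [Ioi_mem_nhds hx] with y hy
    exact besselI_eq_rpow_mul_besselClifford ν hy
  · have hx₂ : x / 2 ≠ 0 := by positivity
    simp only [besselI_eq_rpow_mul_besselClifford _ hx, Real.rpow_sub_one hx₂,
      Real.rpow_add_one hx₂, Function.comp_apply]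
    field_simp
    ring

lemma hasDerivAt_besselI_add_one (ν : ℝ) (hx : 0 < x) :
    HasDerivAt (besselI (ν + 1)) (besselI ν x - (ν + 1) / x * besselI (ν + 1) x) x := by
  refine (hasDerivAt_besselI (ν + 1) hx).congr_deriv ?_
  have hrec := besselI_sub_one (ν + 1) hx
  rw [add_sub_cancel_right] at hrec
  rw [hrec]
  ring

lemma tendsto_besselClifford_sq (ν : ℝ) :
    Tendsto (fun x : ℝ => besselClifford ν (x ^ 2 / 4)) (𝓝[>] 0) (𝓝 (cliffordCoeff ν 0)) := by
  have hcont : Continuous (besselClifford ν) :=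
    continuous_iff_continuousAt.mpr fun t => (hasDerivAt_besselClifford ν t).continuousAt
  have hlim := (hcont.comp (by fun_prop : Continuous fun x : ℝ => x ^ 2 / 4)).tendsto' 0
    (cliffordCoeff ν 0) (by simp [besselClifford_zero_right])
  exact hlim.mono_left nhdsWithin_le_nhds

lemma tendsto_mul_besselI_nhdsGT_zero (hν : -1 < ν) :
    Tendsto (fun x => x * besselI ν x) (𝓝[>] 0) (𝓝 0) := by
  have hν₁ : 0 < ν + 1 := by linarith
  have hpow : Tendsto (fun x : ℝ => 2 * (x / 2) ^ (ν + 1)) (𝓝[>] 0) (𝓝 0) := by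
    have hcont : Continuous fun x : ℝ => 2 * (x / 2) ^ (ν + 1) :=
      ((continuous_id.div_const 2).rpow_const fun _ => Or.inr hν₁.le).const_mul 2
    exact (hcont.tendsto' 0 0 (by simp [Real.zero_rpow hν₁.ne'])).mono_left nhdsWithin_le_nhds
  have hlim := hpow.mul (tendsto_besselClifford_sq ν)
  rw [zero_mul] at hlim
  refine hlim.congr' (eventually_of_mem self_mem_nhdsWithin fun x (hx : 0 < x) => ?_)
  simp only [besselI_eq_rpow_mul_besselClifford ν hx]
  rw [Real.rpow_add_one (by positivity)]
  ring

lemma tendsto_besselI_add_one_div_nhdsGT_zero (hν : -1 < ν) :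
    Tendsto (fun x => besselI (ν + 1) x / (x * besselI ν x)) (𝓝[>] 0) (𝓝 (1 / (2 * (ν + 1)))) := by
  have hc₁ : 0 < cliffordCoeff (ν + 1) 0 := cliffordCoeff_pos (by linarith) 0
  have hlim := ((tendsto_besselClifford_sq (ν + 1)).div (tendsto_besselClifford_sq ν)
    (cliffordCoeff_pos hν 0).ne').const_mul (1 / 2)
  have hvalue : 1 / 2 * (cliffordCoeff (ν + 1) 0 / cliffordCoeff ν 0) = 1 / (2 * (ν + 1)) := by
    rw [cliffordCoeff_eq_mul ν 0, Nat.cast_zero, zero_add, div_mul_cancel_right₀ hc₁.ne',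
      one_div, one_div, mul_inv]
  rw [hvalue] at hlim
  refine hlim.congr' (eventually_of_mem self_mem_nhdsWithin fun x (hx : 0 < x) => ?_)
  have hC := besselClifford_pos hν (by positivity : 0 ≤ x ^ 2 / 4)
  simp only [Pi.div_apply, besselI_eq_rpow_mul_besselClifford _ hx]
  rw [Real.rpow_add_one (by positivity)]
  field_simp

end BesselI

/-- The logarithmic derivative `v(x) = x I_ν'(x) / I_ν(x)` of `I_ν` with respect to `log x`; it
solves the Riccati equation `x v' = x ^ 2 + ν ^ 2 - v ^ 2`. -/
noncomputable def besselLogDeriv (ν x : ℝ) : ℝ := x * logDeriv (besselI ν) x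

/-- The right-hand side `D = x v'` of the Riccati equation. Since `x I_{ν ± 1} = (v ∓ ν) I_ν`, it
is the Turán determinant `x ^ 2 (I_ν ^ 2 - I_{ν - 1} I_{ν + 1}) / I_ν ^ 2`. -/
noncomputable def besselTuran (ν x : ℝ) : ℝ := x ^ 2 + ν ^ 2 - besselLogDeriv ν x ^ 2

section LogDeriv

variable {ν x : ℝ}

lemma besselLogDeriv_eq (hν : -1 < ν) (hx : 0 < x) :
    besselLogDeriv ν x = ν + x * (besselI (ν + 1) x / besselI ν x) := by
  have hI := besselI_pos hν hx
  rw [besselLogDeriv, logDeriv_apply, (hasDerivAt_besselI ν hx).deriv]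
  field_simp
  ring

lemma lt_besselLogDeriv (hν : -1 < ν) (hx : 0 < x) : ν < besselLogDeriv ν x := by
  rw [besselLogDeriv_eq hν hx]
  have h₀ := besselI_pos hν hx
  have h₁ : 0 < besselI (ν + 1) x := besselI_pos (by linarith) hx
  exact lt_add_of_pos_right ν (by positivity)

lemma ratioI_eq_besselLogDeriv_add_div (hν : -1 < ν) (hx : 0 < x) :
    ratioI ν x = (besselLogDeriv ν x + ν) / x := by
  have hI := besselI_pos hν hx
  rw [ratioI, besselI_sub_one ν hx, besselLogDeriv_eq hν hx]
  field_simp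
  ring

lemma hasDerivAt_besselI_sq (hν : -1 < ν) (hx : 0 < x) :
    HasDerivAt (fun y => besselI ν y ^ 2) (2 * besselLogDeriv ν x * besselI ν x ^ 2 / x) x := by
  have hI := besselI_pos hν hx
  refine ((hasDerivAt_besselI ν hx).pow 2).congr_deriv ?_
  rw [besselLogDeriv_eq hν hx]
  field_simp
  ring

lemma hasDerivAt_besselLogDeriv (hν : -1 < ν) (hx : 0 < x) :
    HasDerivAt (besselLogDeriv ν) (besselTuran ν x / x) x := by
  have hI := besselI_pos hν hx
  have hderiv := (((hasDerivAt_id x).mul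
    ((hasDerivAt_besselI_add_one ν hx).div (hasDerivAt_besselI ν hx) hI.ne')).const_add ν)
  refine (hderiv.congr_of_eventuallyEq ?_).congr_deriv ?_
  · filter_upwards [Ioi_mem_nhds hx] with y hy
    exact besselLogDeriv_eq hν hy
  · rw [besselTuran, besselLogDeriv_eq hν hx]
    simp only [Pi.div_apply, id_eq]
    field_simp
    ring

lemma hasDerivAt_besselTuran (hν : -1 < ν) (hx : 0 < x) :
    HasDerivAt (besselTuran ν) (2 * x - 2 * besselLogDeriv ν x * besselTuran ν x / x) x :=
  (((hasDerivAt_pow 2 x).add_const (ν ^ 2)).sub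
    ((hasDerivAt_besselLogDeriv hν hx).pow 2)).congr_deriv (by push_cast; ring)

lemma tendsto_sq_nhdsGT_zero : Tendsto (fun x : ℝ => x ^ 2) (𝓝[>] 0) (𝓝 0) :=
  ((continuous_pow 2).tendsto' 0 0 (by norm_num)).mono_left nhdsWithin_le_nhds

lemma tendsto_besselLogDeriv_nhdsGT_zero (hν : -1 < ν) :
    Tendsto (besselLogDeriv ν) (𝓝[>] 0) (𝓝 ν) := by
  have hlim := (tendsto_sq_nhdsGT_zero.mul
    (tendsto_besselI_add_one_div_nhdsGT_zero hν)).const_add ν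
  rw [zero_mul, add_zero] at hlim
  refine hlim.congr' (eventually_of_mem self_mem_nhdsWithin fun x (hx : 0 < x) => ?_)
  rw [besselLogDeriv_eq hν hx]
  field_simp

lemma tendsto_besselTuran_div_sq_nhdsGT_zero (hν : -1 < ν) :
    Tendsto (fun x => besselTuran ν x / x ^ 2) (𝓝[>] 0) (𝓝 (1 / (ν + 1))) := by
  have hν₁ : ν + 1 ≠ 0 := by linarith
  have hlim := (((tendsto_besselLogDeriv_nhdsGT_zero hν).const_add ν).mul
    (tendsto_besselI_add_one_div_nhdsGT_zero hν)).const_sub 1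
  have hvalue : 1 - (ν + ν) * (1 / (2 * (ν + 1))) = 1 / (ν + 1) := by
    field_simp
    ring
  rw [hvalue] at hlim
  refine hlim.congr' (eventually_of_mem self_mem_nhdsWithin fun x (hx : 0 < x) => ?_)
  have hI := besselI_pos hν hx
  simp only [besselTuran, besselLogDeriv_eq hν hx]
  field_simp
  ring

lemma tendsto_besselTuran_nhdsGT_zero (hν : -1 < ν) :
    Tendsto (besselTuran ν) (𝓝[>] 0) (𝓝 0) := by
  have hlim := (tendsto_sq_nhdsGT_zero.add_const (ν ^ 2)).sub
    ((tendsto_besselLogDeriv_nhdsGT_zero hν).pow 2)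
  rwa [zero_add, sub_self] at hlim

lemma besselTuran_pos (hν : -1 < ν) (hx : 0 < x) : 0 < besselTuran ν x := by
  have hderiv : ∀ y ∈ Ioc 0 x, HasDerivAt (fun y => besselTuran ν y * besselI ν y ^ 2)
      (2 * y * besselI ν y ^ 2) y := fun y hy =>
    ((hasDerivAt_besselTuran hν hy.1).mul (hasDerivAt_besselI_sq hν hy.1)).congr_deriv (by ring)
  have hlim : Tendsto (fun y => besselTuran ν y * besselI ν y ^ 2) (𝓝[>] 0) (𝓝 0) := by
    have hlim' := (tendsto_besselTuran_div_sq_nhdsGT_zero hν).mul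
      ((tendsto_mul_besselI_nhdsGT_zero hν).pow 2)
    rw [zero_pow two_ne_zero, mul_zero] at hlim'
    refine hlim'.congr' (eventually_of_mem self_mem_nhdsWithin fun y (hy : 0 < y) => ?_)
    field_simp
  have hprod := lt_of_tendsto_nhdsGT_of_hasDerivAt_pos hx hderiv hlim fun y hy => by
    have := besselI_pos hν hy.1
    have := hy.1
    positivity
  exact pos_of_mul_pos_left hprod (sq_nonneg _)

lemma besselLogDeriv_lt_add (hν : 0 ≤ ν) (hx : 0 < x) : besselLogDeriv ν x < x + ν := by
  have hD := besselTuran_pos (ν := ν) (by linarith) hx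
  rw [besselTuran] at hD
  exact lt_of_pow_lt_pow_left₀ 2 (by positivity) (by nlinarith [mul_nonneg hx.le hν])

end LogDeriv

/-- The parameter `τ(x) = x ^ 2 / D - v - 1 / 2` for which the bound with `λ = τ(x)` is tangent to
`h` at `x`; equivalently `τ = x v'' / (2 v')`. -/
noncomputable def tangencyParam (ν x : ℝ) : ℝ :=
  x ^ 2 / besselTuran ν x - besselLogDeriv ν x - 1 / 2

/-- The quantity `T = -x τ'(x)`, whose sign governs the monotonicity of `tangencyParam`. -/
noncomputable def tangencyDecay (ν x : ℝ) : ℝ :=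
  besselTuran ν x - x ^ 2 / besselTuran ν x * (1 - 2 * tangencyParam ν x)

section Tangency

variable {ν x y : ℝ}

lemma hasDerivAt_tangencyParam (hν : -1 < ν) (hx : 0 < x) :
    HasDerivAt (tangencyParam ν) (-tangencyDecay ν x / x) x := by
  have hD := besselTuran_pos hν hx
  refine ((((hasDerivAt_pow 2 x).div (hasDerivAt_besselTuran hν hx) hD.ne').sub
    (hasDerivAt_besselLogDeriv hν hx)).sub_const (1 / 2)).congr_deriv ?_
  rw [tangencyDecay, tangencyParam]
  push_cast
  field_simp
  ring

lemma hasDerivAt_tangencyDecay (hν : -1 < ν) (hx : 0 < x) :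
    HasDerivAt (tangencyDecay ν)
      ((tangencyDecay ν x * (1 - 2 * tangencyParam ν x - 2 * (x ^ 2 / besselTuran ν x)) +
        4 * tangencyParam ν x * besselTuran ν x) / x) x := by
  have hD := besselTuran_pos hν hx
  refine ((hasDerivAt_besselTuran hν hx).sub
    (((hasDerivAt_pow 2 x).div (hasDerivAt_besselTuran hν hx) hD.ne').mul
      (((hasDerivAt_tangencyParam hν hx).const_mul 2).const_sub 1))).congr_deriv ?_
  have hv : besselLogDeriv ν x = x ^ 2 / besselTuran ν x - tangencyParam ν x - 1 / 2 := by
    rw [tangencyParam]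
    ring
  simp only [Pi.div_apply]
  rw [tangencyDecay, hv]
  generalize tangencyParam ν x = τ
  push_cast
  field_simp
  ring

lemma hasDerivAt_tangencyDecay_mul (hν : -1 < ν) (hx : 0 < x) :
    HasDerivAt (fun y => tangencyDecay ν y * (besselTuran ν y / y) ^ 2 * besselI ν y ^ 2)
      (4 * tangencyParam ν x * besselTuran ν x ^ 3 * besselI ν x ^ 2 / x ^ 3) x := by
  have hD := besselTuran_pos hν hx
  refine (((hasDerivAt_tangencyDecay hν hx).mul
    (((hasDerivAt_besselTuran hν hx).div (hasDerivAt_id x) hx.ne').pow 2)).mul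
      (hasDerivAt_besselI_sq hν hx)).congr_deriv ?_
  have hv : besselLogDeriv ν x = x ^ 2 / besselTuran ν x - tangencyParam ν x - 1 / 2 := by
    rw [tangencyParam]
    ring
  simp only [Pi.pow_apply, Pi.div_apply, Pi.mul_apply, id_eq]
  rw [hv]
  generalize tangencyParam ν x = τ
  generalize tangencyDecay ν x = T
  push_cast
  field_simp
  ring

lemma tendsto_sq_div_besselTuran_nhdsGT_zero (hν : -1 < ν) :
    Tendsto (fun x => x ^ 2 / besselTuran ν x) (𝓝[>] 0) (𝓝 (ν + 1)) := by
  have hν₁ : 1 / (ν + 1) ≠ 0 := one_div_ne_zero (by linarith)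
  simpa only [inv_div, div_one] using (tendsto_besselTuran_div_sq_nhdsGT_zero hν).inv₀ hν₁

lemma tendsto_tangencyParam_nhdsGT_zero (hν : -1 < ν) :
    Tendsto (tangencyParam ν) (𝓝[>] 0) (𝓝 (1 / 2)) := by
  have hlim := ((tendsto_sq_div_besselTuran_nhdsGT_zero hν).sub
    (tendsto_besselLogDeriv_nhdsGT_zero hν)).sub_const (1 / 2)
  rwa [show ν + 1 - ν - 1 / 2 = 1 / 2 by ring] at hlim

lemma tendsto_tangencyDecay_nhdsGT_zero (hν : -1 < ν) :
    Tendsto (tangencyDecay ν) (𝓝[>] 0) (𝓝 0) := by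
  have hlim := (tendsto_besselTuran_nhdsGT_zero hν).sub
    ((tendsto_sq_div_besselTuran_nhdsGT_zero hν).mul
      (((tendsto_tangencyParam_nhdsGT_zero hν).const_mul 2).const_sub 1))
  rwa [show (0 : ℝ) - (ν + 1) * (1 - 2 * (1 / 2)) = 0 by ring] at hlim

lemma tangencyDecay_pos_of_forall_tangencyParam_pos (hν : -1 < ν) (hx : 0 < x)
    (hpos : ∀ y ∈ Ioo 0 x, 0 < tangencyParam ν y) : 0 < tangencyDecay ν x := by
  have hlim : Tendsto (fun y => tangencyDecay ν y * (besselTuran ν y / y) ^ 2 * besselI ν y ^ 2)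
      (𝓝[>] 0) (𝓝 0) := by
    have hlim' := ((tendsto_tangencyDecay_nhdsGT_zero hν).mul
      ((tendsto_besselTuran_div_sq_nhdsGT_zero hν).pow 2)).mul
        ((tendsto_mul_besselI_nhdsGT_zero hν).pow 2)
    rw [zero_mul, zero_mul] at hlim'
    refine hlim'.congr' (eventually_of_mem self_mem_nhdsWithin fun y (hy : 0 < y) => ?_)
    field_simp
  have hprod := lt_of_tendsto_nhdsGT_of_hasDerivAt_pos hx
    (fun y hy => hasDerivAt_tangencyDecay_mul hν hy.1) hlim fun y hy => by
      have hy₀ := hy.1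
      have hτ := hpos y hy
      have hD := besselTuran_pos hν hy₀
      have hI := besselI_pos hν hy₀
      positivity
  rw [mul_assoc] at hprod
  exact pos_of_mul_pos_left hprod (by positivity)

lemma sq_eq_mul_besselTuran (hν : -1 < ν) (hx : 0 < x) :
    x ^ 2 = (besselLogDeriv ν x + 1 / 2 + tangencyParam ν x) * besselTuran ν x := by
  have hD := besselTuran_pos hν hx
  rw [tangencyParam]
  field_simp
  ring

lemma sub_half_mul_besselTuran (hν : -1 < ν) (hx : 0 < x) :
    (besselLogDeriv ν x + tangencyParam ν x - 1 / 2) * besselTuran ν x =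
      besselLogDeriv ν x ^ 2 - ν ^ 2 := by
  have hsq := sq_eq_mul_besselTuran hν hx
  have hD : besselTuran ν x = x ^ 2 + ν ^ 2 - besselLogDeriv ν x ^ 2 := rfl
  linarith

lemma half_lt_besselLogDeriv_add_tangencyParam (hν : 0 ≤ ν) (hx : 0 < x) :
    1 / 2 < besselLogDeriv ν x + tangencyParam ν x := by
  have hν₁ : -1 < ν := by linarith
  have hv : ν ^ 2 < besselLogDeriv ν x ^ 2 := by gcongr; exact lt_besselLogDeriv hν₁ hx
  have hprod := sub_half_mul_besselTuran hν₁ hx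
  have := pos_of_mul_pos_left (hprod ▸ sub_pos.mpr hv) (besselTuran_pos hν₁ hx).le
  linarith

lemma sub_half_mul_tangencyDecay_of_tangencyParam_eq_zero (hν : -1 < ν) (hx : 0 < x)
    (hτ : tangencyParam ν x = 0) :
    (besselLogDeriv ν x - 1 / 2) * tangencyDecay ν x = 1 / 4 - ν ^ 2 := by
  have hprod := sub_half_mul_besselTuran hν hx
  have hratio : x ^ 2 / besselTuran ν x = besselLogDeriv ν x + 1 / 2 := by
    rw [tangencyParam] at hτ
    linarith
  rw [hτ, add_zero] at hprod
  rw [tangencyDecay, hratio, hτ, mul_sub, hprod]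
  ring

lemma lt_half_of_tangencyParam_nonpos (hν : 0 ≤ ν) (hx : 0 < x) (hτ : tangencyParam ν x ≤ 0) :
    ν < 1 / 2 := by
  have hν₁ : -1 < ν := by linarith
  obtain ⟨w, hw, hτw, hpos⟩ := exists_first_zero hx
    (fun y hy => (hasDerivAt_tangencyParam hν₁ hy.1).continuousAt.continuousWithinAt)
    ((tendsto_tangencyParam_nhdsGT_zero hν₁).eventually_const_lt one_half_pos) hτ
  have hT := tangencyDecay_pos_of_forall_tangencyParam_pos hν₁ hw.1 hpos
  have hv := half_lt_besselLogDeriv_add_tangencyParam hν hw.1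
  rw [hτw, add_zero] at hv
  have hprod := mul_pos (sub_pos.mpr hv) hT
  rw [sub_half_mul_tangencyDecay_of_tangencyParam_eq_zero hν₁ hw.1 hτw] at hprod
  nlinarith

lemma tangencyParam_pos (hν : 1 / 2 ≤ ν) (hx : 0 < x) : 0 < tangencyParam ν x :=
  not_le.mp fun h => hν.not_gt (lt_half_of_tangencyParam_nonpos (by linarith) hx h)

-- A zero of `τ` forces `ν < 1 / 2`, and then `T > 0` there: `τ` can only cross zero downwards.
lemma tangencyParam_nonpos_of_lt (hν : 0 ≤ ν) (hx : 0 < x) (hxy : x < y)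
    (hτ : tangencyParam ν x ≤ 0) : tangencyParam ν y ≤ 0 := by
  have hν₁ : -1 < ν := by linarith
  have hν₂ := lt_half_of_tangencyParam_nonpos hν hx hτ
  refine image_le_of_deriv_right_lt_deriv_boundary (B := fun _ => 0) (B' := fun _ => 0)
    (fun w hw => (hasDerivAt_tangencyParam hν₁ (hx.trans_le hw.1)).continuousAt.continuousWithinAt)
    (fun w hw => (hasDerivAt_tangencyParam hν₁ (hx.trans_le hw.1)).hasDerivWithinAt) hτ
    (fun w => hasDerivAt_const w 0) (fun w hw hτw => ?_) ⟨hxy.le, le_rfl⟩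
  have hw₀ := hx.trans_le hw.1
  have hv := half_lt_besselLogDeriv_add_tangencyParam hν hw₀
  rw [hτw, add_zero] at hv
  have hprod := sub_half_mul_tangencyDecay_of_tangencyParam_eq_zero hν₁ hw₀ hτw
  have hT : 0 < tangencyDecay ν w :=
    pos_of_mul_pos_right (hprod ▸ by nlinarith) (sub_pos.mpr hv).le
  exact div_neg_of_neg_of_pos (neg_neg_of_pos hT) hw₀

lemma tangencyParam_pos_of_lt (hν : 0 ≤ ν) (hx : 0 < x) (hxy : x < y)
    (hτ : 0 < tangencyParam ν y) : 0 < tangencyParam ν x :=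
  not_le.mp fun h => hτ.not_ge (tangencyParam_nonpos_of_lt hν hx hxy h)

lemma tangencyDecay_pos (hν : 0 ≤ ν) (hx : 0 < x) (hτ : 0 < tangencyParam ν x) :
    0 < tangencyDecay ν x :=
  tangencyDecay_pos_of_forall_tangencyParam_pos (by linarith) hx fun _ hy =>
    tangencyParam_pos_of_lt hν hy.1 hy.2 hτ

lemma tangencyParam_lt_of_lt (hν : 0 ≤ ν) (hx : 0 < x) (hxy : x < y)
    (hτ : 0 < tangencyParam ν x) : tangencyParam ν y < tangencyParam ν x := by
  have hν₁ : -1 < ν := by linarith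
  rcases le_or_gt (tangencyParam ν y) 0 with hτy | hτy
  · exact hτy.trans_lt hτ
  have hanti : StrictAntiOn (tangencyParam ν) (Icc x y) := by
    refine strictAntiOn_of_deriv_neg (convex_Icc x y) (fun w hw =>
      (hasDerivAt_tangencyParam hν₁ (hx.trans_le hw.1)).continuousAt.continuousWithinAt)
      fun w hw => ?_
    rw [interior_Icc] at hw
    have hw₀ := hx.trans hw.1
    have hT := tangencyDecay_pos hν hw₀ (tangencyParam_pos_of_lt hν hw₀ hw.2 hτy)
    rw [(hasDerivAt_tangencyParam hν₁ hw₀).deriv]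
    exact div_neg_of_neg_of_pos (neg_neg_of_pos hT) hw₀
  exact hanti ⟨le_rfl, hxy.le⟩ ⟨hxy.le, le_rfl⟩ hxy

lemma lt_of_tangencyParam_lt (hν : 0 ≤ ν) (hy : 0 < y) (hτ : 0 < tangencyParam ν x)
    (h : tangencyParam ν y < tangencyParam ν x) : x < y := by
  refine lt_of_not_ge fun hyx => ?_
  rcases hyx.eq_or_lt with rfl | hlt
  · exact h.false
  · exact h.not_gt (tangencyParam_lt_of_lt hν hy hlt (tangencyParam_pos_of_lt hν hy hlt hτ))

lemma tangencyParam_lt_half (hν : 0 ≤ ν) (hx : 0 < x) : tangencyParam ν x < 1 / 2 := by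
  rcases le_or_gt (tangencyParam ν x) 0 with hτ | hτ
  · linarith
  have hanti : ∀ y ∈ Ioo 0 x, tangencyParam ν x < tangencyParam ν y := fun y hy =>
    tangencyParam_lt_of_lt hν hy.1 hy.2 (tangencyParam_pos_of_lt hν hy.1 hy.2 hτ)
  have hhalf : x / 2 ∈ Ioo 0 x := ⟨half_pos hx, half_lt_self hx⟩
  refine (hanti _ hhalf).trans_le
    (ge_of_tendsto (tendsto_tangencyParam_nhdsGT_zero (by linarith : -1 < ν)) ?_)
  filter_upwards [Ioo_mem_nhdsGT hhalf.1] with y hy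
  exact (tangencyParam_lt_of_lt hν hy.1 hy.2
    (hτ.trans (hanti y ⟨hy.1, hy.2.trans hhalf.2⟩))).le

end Tangency

/-- The value `F_λ(x)` of `B` for which the bound meets `h` at `x`: solving `L(x) = h(x)`, that is
`√(B + x ^ 2) = v + 1 / 2 + λ`, for `B`. -/
noncomputable def contactLevel (ν lam x : ℝ) : ℝ := (besselLogDeriv ν x + 1 / 2 + lam) ^ 2 - x ^ 2

section Contact

variable {ν lam B x y : ℝ}

lemma hasDerivAt_contactLevel (lam : ℝ) (hν : -1 < ν) (hx : 0 < x) :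
    HasDerivAt (contactLevel ν lam)
      (2 * besselTuran ν x / x * (lam - tangencyParam ν x)) x := by
  have hD := besselTuran_pos hν hx
  refine (((((hasDerivAt_besselLogDeriv hν hx).add_const (1 / 2)).add_const lam).pow 2).sub
    (hasDerivAt_pow 2 x)).congr_deriv ?_
  rw [tangencyParam]
  push_cast
  field_simp
  ring

lemma lowI_le_ratioI_iff (hν : 0 ≤ ν) (hlam : 0 ≤ lam) (hx : 0 < x) :
    lowI ν lam B x ≤ ratioI ν x ↔ B ≤ contactLevel ν lam x := by
  have hν₁ : -1 < ν := by linarith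
  have hu : 0 ≤ besselLogDeriv ν x + 1 / 2 + lam := by linarith [lt_besselLogDeriv hν₁ hx]
  rw [lowI, ratioI_eq_besselLogDeriv_add_div hν₁ hx, div_le_div_iff_of_pos_right hx, contactLevel,
    le_sub_iff_add_le, ← Real.sqrt_le_left hu]
  constructor <;> intro h <;> linarith

lemma ratioI_eq_lowI_iff (hν : 0 ≤ ν) (hlam : 0 ≤ lam) (hx : 0 < x) :
    ratioI ν x = lowI ν lam B x ↔ B = contactLevel ν lam x := by
  have hν₁ : -1 < ν := by linarith
  have hu : 0 < besselLogDeriv ν x + 1 / 2 + lam := by linarith [lt_besselLogDeriv hν₁ hx]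
  rw [lowI, ratioI_eq_besselLogDeriv_add_div hν₁ hx, div_left_inj' hx.ne', contactLevel,
    eq_sub_iff_add_eq, eq_comm (a := B + x ^ 2), sq (_ + lam),
    ← Real.sqrt_eq_iff_mul_self_eq_of_pos hu]
  constructor <;> intro h <;> linarith

lemma deriv_ratioI_eq_deriv_lowI (hν : -1 < ν) (hB : 0 < B) (hx : 0 < x)
    (hle : ∀ y > 0, lowI ν lam B y ≤ ratioI ν y) (heq : ratioI ν x = lowI ν lam B x) :
    deriv (ratioI ν) x = deriv (lowI ν lam B) x := by
  have hratio : DifferentiableAt ℝ (ratioI ν) x := by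
    have hdiff := ((hasDerivAt_besselLogDeriv hν hx).differentiableAt.add_const ν).div
      differentiableAt_id hx.ne'
    refine hdiff.congr_of_eventuallyEq ?_
    filter_upwards [Ioi_mem_nhds hx] with y hy
    exact ratioI_eq_besselLogDeriv_add_div hν hy
  have hlow : DifferentiableAt ℝ (lowI ν lam B) x := by
    have : B + x ^ 2 ≠ 0 := by positivity
    unfold lowI
    fun_prop (disch := first | assumption | exact hx.ne')
  have hmin : IsLocalMin (ratioI ν - lowI ν lam B) x := by
    filter_upwards [Ioi_mem_nhds hx] with y hy
    simpa [heq] using hle y hy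
  rw [← sub_eq_zero, ← deriv_sub hratio hlow]
  exact hmin.deriv_eq_zero

lemma strictAntiOn_contactLevel (hν : -1 < ν) (hx : 0 < x)
    (hτ : ∀ w ∈ Ioo x y, lam < tangencyParam ν w) :
    StrictAntiOn (contactLevel ν lam) (Icc x y) := by
  refine strictAntiOn_of_deriv_neg (convex_Icc x y) (fun w hw =>
    (hasDerivAt_contactLevel lam hν (hx.trans_le hw.1)).continuousAt.continuousWithinAt)
    fun w hw => ?_
  rw [interior_Icc] at hw
  have hw₀ := hx.trans hw.1
  have hD := besselTuran_pos hν hw₀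
  rw [(hasDerivAt_contactLevel lam hν hw₀).deriv]
  exact mul_neg_of_pos_of_neg (by positivity) (sub_neg.mpr (hτ w hw))

lemma strictMonoOn_contactLevel (hν : -1 < ν) (hx : 0 < x)
    (hτ : ∀ w ∈ Ioo x y, tangencyParam ν w < lam) :
    StrictMonoOn (contactLevel ν lam) (Icc x y) := by
  refine strictMonoOn_of_deriv_pos (convex_Icc x y) (fun w hw =>
    (hasDerivAt_contactLevel lam hν (hx.trans_le hw.1)).continuousAt.continuousWithinAt)
    fun w hw => ?_
  rw [interior_Icc] at hw
  have hw₀ := hx.trans hw.1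
  have hD := besselTuran_pos hν hw₀
  rw [(hasDerivAt_contactLevel lam hν hw₀).deriv]
  exact mul_pos (by positivity) (sub_pos.mpr (hτ w hw))

lemma contactLevel_lt_of_tangencyParam_eq (hν : 0 ≤ ν) (hlam : 0 < lam) (hx : 0 < x)
    (hτ : tangencyParam ν x = lam) (hy : 0 < y) (hyx : y ≠ x) :
    contactLevel ν lam x < contactLevel ν lam y := by
  have hν₁ : -1 < ν := by linarith
  subst hτ
  rcases hyx.lt_or_gt with hlt | hlt
  · exact strictAntiOn_contactLevel hν₁ hy (fun w hw =>
      have hw₀ := hy.trans hw.1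
      tangencyParam_lt_of_lt hν hw₀ hw.2 (tangencyParam_pos_of_lt hν hw₀ hw.2 hlam))
      ⟨le_rfl, hlt.le⟩ ⟨hlt.le, le_rfl⟩ hlt
  · exact strictMonoOn_contactLevel hν₁ hx (fun w hw => tangencyParam_lt_of_lt hν hx hw.1 hlam)
      ⟨le_rfl, hlt.le⟩ ⟨hlt.le, le_rfl⟩ hlt

lemma contactLevel_lt_contactLevel {mu : ℝ} (hν : 0 ≤ ν) (hx : 0 < x) (hlam : 0 ≤ lam)
    (h : lam < mu) : contactLevel ν lam x < contactLevel ν mu x := by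
  have hu : 0 ≤ besselLogDeriv ν x + 1 / 2 + lam := by
    linarith [lt_besselLogDeriv (by linarith : -1 < ν) hx]
  unfold contactLevel
  gcongr

lemma contactLevel_pos_of_tangencyParam_eq (hlam : lam ∈ Ioo (0 : ℝ) (1 / 2))
    (hν : 1 / 2 - lam ≤ ν) (hx : 0 < x) (hτ : tangencyParam ν x = lam) :
    0 < contactLevel ν lam x := by
  obtain ⟨hlam₀, hlam₁⟩ := hlam
  have hν₀ : 0 ≤ ν := by linarith
  have hν₁ : -1 < ν := by linarith
  have hv := lt_besselLogDeriv hν₁ hx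
  have hsq := sq_eq_mul_besselTuran hν₁ hx
  have hprod := sub_half_mul_besselTuran hν₁ hx
  have hu := half_lt_besselLogDeriv_add_tangencyParam hν₀ hx
  rw [hτ] at hsq hprod hu
  rw [contactLevel, hsq]
  generalize besselLogDeriv ν x = v at *
  generalize besselTuran ν x = D at *
  have hlt : (v + lam - 1 / 2) * D < (v + lam - 1 / 2) * (v + 1 / 2 + lam) := by
    rw [hprod]
    nlinarith
  have hD := lt_of_mul_lt_mul_left hlt (by linarith)
  nlinarith

end Contact
section Asymptotics

variable {ν lam : ℝ}

lemma frequently_sub_lt_besselLogDeriv {c : ℝ} (hν : 0 ≤ ν) (hc : 1 / 2 < c) :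
    ∃ᶠ x in atTop, x - c < besselLogDeriv ν x := by
  intro hcontra
  have hν₁ : -1 < ν := by linarith
  obtain ⟨N, hN⟩ := eventually_atTop.mp
    ((hcontra.and (eventually_ge_atTop (c ^ 2 / (c - 1 / 2)))).and (eventually_gt_atTop 0))
  have hN₀ : 0 < N := (hN N le_rfl).2
  -- `v ≤ x - c` forces `v' ≥ 2 * c - c ^ 2 / x`, with limit `2 * c > 1`,
  -- while `v < x + ν`.
  have hslope : ∀ x ≥ N, c + 1 / 2 ≤ besselTuran ν x / x := by
    intro x hx
    obtain ⟨⟨hvx, hcx⟩, hx₀⟩ := hN x hx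
    have hv := lt_besselLogDeriv hν₁ hx₀
    rw [div_le_iff₀ (by linarith)] at hcx
    rw [le_div_iff₀ hx₀, besselTuran]
    nlinarith [not_lt.mp hvx]
  have hgrowth := Convex.mul_sub_le_image_sub_of_le_deriv (convex_Ici N) (f := besselLogDeriv ν)
    (fun x hx => (hasDerivAt_besselLogDeriv hν₁ (hN₀.trans_le hx)).continuousAt.continuousWithinAt)
    (fun x hx => (hasDerivAt_besselLogDeriv hν₁
      (hN₀.trans_le (interior_subset hx))).differentiableAt.differentiableWithinAt)
    fun x hx => (hasDerivAt_besselLogDeriv hν₁ (hN₀.trans_le (interior_subset hx))).deriv ▸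
      hslope x (interior_subset hx)
  obtain ⟨x, hNx, hx⟩ := ((eventually_ge_atTop N).and (eventually_gt_atTop
    ((ν + (c + 1 / 2) * N) / (c - 1 / 2)))).exists
  rw [div_lt_iff₀ (by linarith)] at hx
  have hgrow := hgrowth N self_mem_Ici x hNx hNx
  have := lt_besselLogDeriv hν₁ hN₀
  have := besselLogDeriv_lt_add hν (hN₀.trans_le hNx)
  linarith

lemma eventually_besselLogDeriv_lt_of_forall_lt_tangencyParam {δ : ℝ} (hν : -1 < ν)
    (hτ : ∀ x > 0, lam < tangencyParam ν x) (hδ : 0 < δ) :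
    ∀ᶠ x in atTop, besselLogDeriv ν x + 1 / 2 + lam < x + δ := by
  filter_upwards [eventually_gt_atTop 1,
    eventually_gt_atTop (contactLevel ν lam 1 / (2 * δ))] with x hx hC
  have hle : contactLevel ν lam x < contactLevel ν lam 1 :=
    strictAntiOn_contactLevel hν one_pos (fun w hw => hτ w (one_pos.trans hw.1))
      ⟨le_rfl, hx.le⟩ ⟨hx.le, le_rfl⟩ hx
  rw [div_lt_iff₀ (by positivity)] at hC
  refine lt_of_pow_lt_pow_left₀ 2 (by positivity) ?_
  rw [contactLevel] at hle
  nlinarith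

lemma exists_tangencyParam_lt (hν : 0 ≤ ν) (hlam : 0 < lam) : ∃ x > 0, tangencyParam ν x < lam := by
  by_contra! hcontra
  have hlt : ∀ x > 0, lam / 2 < tangencyParam ν x := fun x hx =>
    (half_lt_self hlam).trans_le (hcontra x hx)
  obtain ⟨x, hgt, hlt⟩ := ((frequently_sub_lt_besselLogDeriv (c := 1 / 2 + lam / 4) hν
    (by linarith)).and_eventually (eventually_besselLogDeriv_lt_of_forall_lt_tangencyParam
      (by linarith) hlt (δ := lam / 4) (by positivity))).exists
  linarith

lemma exists_tangencyParam_eq (hν : 0 ≤ ν) (hlam : lam ∈ Ioo (0 : ℝ) (1 / 2)) :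
    ∃ x ∈ Ioi 0, tangencyParam ν x = lam := by
  have hν₁ : -1 < ν := by linarith
  obtain ⟨y, hy, hy₀⟩ := (((tendsto_tangencyParam_nhdsGT_zero hν₁).eventually_const_lt hlam.2).and
    self_mem_nhdsWithin).exists
  obtain ⟨x, hx₀, hx⟩ := exists_tangencyParam_lt hν hlam.1
  exact isPreconnected_Ioi.intermediate_value hx₀ hy₀
    (fun w hw => (hasDerivAt_tangencyParam hν₁ hw).continuousAt.continuousWithinAt)
    ⟨hx.le, hy.le⟩

lemma besselTuran_eq_add_sub_contactLevel (ν x : ℝ) :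
    besselTuran ν x = besselLogDeriv ν x + 1 / 2 + (ν ^ 2 - 1 / 4) - contactLevel ν 0 x := by
  rw [besselTuran, contactLevel]
  ring

lemma lt_contactLevel_zero (hν : 1 / 2 ≤ ν) {x : ℝ} (hx : 0 < x) :
    ν ^ 2 - 1 / 4 < contactLevel ν 0 x := by
  have hν₁ : -1 < ν := by linarith
  have hv := lt_besselLogDeriv hν₁ hx
  have hprod := sub_half_mul_besselTuran hν₁ hx
  have hD := besselTuran_eq_add_sub_contactLevel ν x
  have hlt : (besselLogDeriv ν x - 1 / 2) * besselTuran ν x < besselLogDeriv ν x ^ 2 - ν ^ 2 := by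
    rw [← hprod]
    nlinarith [mul_pos (tangencyParam_pos hν hx) (besselTuran_pos hν₁ hx)]
  nlinarith

lemma antitoneOn_besselLogDeriv_add_div {c : ℝ} (hν : -1 < ν)
    (hD : ∀ x > 0, besselTuran ν x ≤ besselLogDeriv ν x + c) :
    AntitoneOn (fun x => (besselLogDeriv ν x + c) / x) (Ioi 0) := by
  have hderiv : ∀ x > 0, HasDerivAt (fun x => (besselLogDeriv ν x + c) / x)
      ((besselTuran ν x - (besselLogDeriv ν x + c)) / x ^ 2) x := fun x hx =>
    (((hasDerivAt_besselLogDeriv hν hx).add_const c).div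
      (hasDerivAt_id x) hx.ne').congr_deriv (by simp only [id_eq]; field_simp)
  refine antitoneOn_of_deriv_nonpos (convex_Ioi 0)
    (fun x hx => (hderiv x hx).continuousAt.continuousWithinAt)
    (fun x hx => (hderiv x (interior_subset hx)).differentiableAt.differentiableWithinAt)
    fun x hx => ?_
  rw [(hderiv x (interior_subset hx)).deriv]
  exact div_nonpos_of_nonpos_of_nonneg (sub_nonpos.mpr (hD x (interior_subset hx))) (sq_nonneg x)

lemma exists_contactLevel_zero_lt {b : ℝ} (hν : 1 / 2 ≤ ν) (hb : ν ^ 2 - 1 / 4 < b) :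
    ∃ x > 0, contactLevel ν 0 x < b := by
  by_contra! hcontra
  have hν₁ : -1 < ν := by linarith
  obtain ⟨ε, hε, rfl⟩ : ∃ ε > 0, b = ν ^ 2 - 1 / 4 + ε := ⟨_, sub_pos.mpr hb, by ring⟩
  have hanti := antitoneOn_besselLogDeriv_add_div (c := 1 / 2 - ε) hν₁ fun x hx => by
    linarith [hcontra x hx, besselTuran_eq_add_sub_contactLevel ν x]
  -- With `u = v + 1 / 2`, the antitone ratio `(u - ε) / x` drops below `1` because eventually
  -- `u < x + ε / 2`; but `u > x`.
  obtain ⟨x₁, hx₁, hu₁⟩ := ((eventually_gt_atTop 0).and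
    (eventually_besselLogDeriv_lt_of_forall_lt_tangencyParam hν₁ (lam := 0)
      (fun x hx => tangencyParam_pos hν hx) (half_pos hε))).exists
  obtain ⟨x, hx₁x, hx⟩ := ((eventually_ge_atTop x₁).and (eventually_gt_atTop (2 * x₁))).exists
  have hx₀ : 0 < x := hx₁.trans_le hx₁x
  have hratio := hanti hx₁ hx₀ hx₁x
  have hu : x < besselLogDeriv ν x + 1 / 2 := by
    have hF := hcontra x hx₀
    rw [contactLevel] at hF
    have := lt_besselLogDeriv hν₁ hx₀
    exact lt_of_pow_lt_pow_left₀ 2 (by linarith) (by nlinarith)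
  rw [div_le_div_iff₀ hx₀ hx₁] at hratio
  nlinarith

end Asymptotics

/-- The point `x*(λ)` at which the optimal bound touches `h`, encoded as a solution `x > 0` of
`τ(x) = λ`; it exists for `0 ≤ ν` and `0 < λ < 1 / 2` and is an arbitrary real number otherwise. -/
noncomputable def contactPoint (ν lam : ℝ) : ℝ := Function.invFunOn (tangencyParam ν) (Ioi 0) lam

/-- The optimal constant `B(λ)`, the minimum of the contact level `F_λ`. -/
noncomputable def optimalLevel (ν lam : ℝ) : ℝ := contactLevel ν lam (contactPoint ν lam)

section Optimal

variable {ν lam x : ℝ}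

lemma contactPoint_pos (hν : 0 ≤ ν) (hlam : lam ∈ Ioo (0 : ℝ) (1 / 2)) : 0 < contactPoint ν lam :=
  Function.invFunOn_mem (exists_tangencyParam_eq hν hlam)

lemma tangencyParam_contactPoint (hν : 0 ≤ ν) (hlam : lam ∈ Ioo (0 : ℝ) (1 / 2)) :
    tangencyParam ν (contactPoint ν lam) = lam :=
  Function.invFunOn_eq (exists_tangencyParam_eq hν hlam)

lemma optimalLevel_lt_contactLevel (hν : 0 ≤ ν) (hlam : lam ∈ Ioo (0 : ℝ) (1 / 2)) (hx : 0 < x)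
    (hne : x ≠ contactPoint ν lam) : optimalLevel ν lam < contactLevel ν lam x :=
  contactLevel_lt_of_tangencyParam_eq hν hlam.1 (contactPoint_pos hν hlam)
    (tangencyParam_contactPoint hν hlam) hx hne

lemma optimalLevel_le_contactLevel (hν : 0 ≤ ν) (hlam : lam ∈ Ioo (0 : ℝ) (1 / 2)) (hx : 0 < x) :
    optimalLevel ν lam ≤ contactLevel ν lam x := by
  rcases eq_or_ne x (contactPoint ν lam) with rfl | hne
  · exact le_rfl
  · exact (optimalLevel_lt_contactLevel hν hlam hx hne).le

lemma optimalLevel_pos (hlam : lam ∈ Ioo (0 : ℝ) (1 / 2)) (hν : 1 / 2 - lam ≤ ν) :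
    0 < optimalLevel ν lam :=
  have hν₀ : 0 ≤ ν := by linarith [hlam.2]
  contactLevel_pos_of_tangencyParam_eq hlam hν (contactPoint_pos hν₀ hlam)
    (tangencyParam_contactPoint hν₀ hlam)

lemma touchesBelowI_iff_eq_optimalLevel (hlam : lam ∈ Ioo (0 : ℝ) (1 / 2)) (hν : 1 / 2 - lam ≤ ν)
    (b : ℝ) : TouchesBelowI ν lam b ↔ b = optimalLevel ν lam := by
  have hν₀ : 0 ≤ ν := by linarith [hlam.2]
  have hp := contactPoint_pos hν₀ hlam
  constructor
  · rintro ⟨-, hle, x, hx, heq⟩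
    rw [ratioI_eq_lowI_iff hν₀ hlam.1.le hx] at heq
    exact le_antisymm ((lowI_le_ratioI_iff hν₀ hlam.1.le hp).mp (hle _ hp))
      (heq ▸ optimalLevel_le_contactLevel hν₀ hlam hx)
  · rintro rfl
    exact ⟨optimalLevel_pos hlam hν, fun x hx => (lowI_le_ratioI_iff hν₀ hlam.1.le hx).mpr
      (optimalLevel_le_contactLevel hν₀ hlam hx), contactPoint ν lam, hp,
      (ratioI_eq_lowI_iff hν₀ hlam.1.le hp).mpr rfl⟩

lemma tangentBelowI_contactPoint (hlam : lam ∈ Ioo (0 : ℝ) (1 / 2)) (hν : 1 / 2 - lam ≤ ν) :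
    TangentBelowI ν lam (optimalLevel ν lam) (contactPoint ν lam) := by
  have hν₀ : 0 ≤ ν := by linarith [hlam.2]
  have hp := contactPoint_pos hν₀ hlam
  obtain ⟨hB, hle, -⟩ := (touchesBelowI_iff_eq_optimalLevel hlam hν _).mpr rfl
  have heq : ratioI ν (contactPoint ν lam) = lowI ν lam (optimalLevel ν lam) (contactPoint ν lam) :=
    (ratioI_eq_lowI_iff hν₀ hlam.1.le hp).mpr rfl
  refine ⟨hp, heq, fun x hx hxeq => by_contra fun hne => ?_,
    deriv_ratioI_eq_deriv_lowI (by linarith) hB hp hle heq⟩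
  exact (optimalLevel_lt_contactLevel hν₀ hlam hx hne).ne
    ((ratioI_eq_lowI_iff hν₀ hlam.1.le hx).mp hxeq)

lemma strictAntiOn_contactPoint (hν : 0 ≤ ν) :
    StrictAntiOn (contactPoint ν) (Ioo (0 : ℝ) (1 / 2)) := fun lam hlam mu hmu h =>
  lt_of_tangencyParam_lt hν (contactPoint_pos hν hlam)
    (by rw [tangencyParam_contactPoint hν hmu]; exact hmu.1)
    (by rwa [tangencyParam_contactPoint hν hlam, tangencyParam_contactPoint hν hmu])

lemma strictMonoOn_optimalLevel (hν : 0 ≤ ν) :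
    StrictMonoOn (optimalLevel ν) (Ioo (0 : ℝ) (1 / 2)) := fun lam hlam mu hmu h => by
  have hp := contactPoint_pos hν hmu
  calc optimalLevel ν lam ≤ contactLevel ν lam (contactPoint ν mu) :=
        optimalLevel_le_contactLevel hν hlam hp
    _ < optimalLevel ν mu := contactLevel_lt_contactLevel hν hp hlam.1.le h

lemma tendsto_contactPoint_nhdsLT_half (hν : 0 ≤ ν) :
    Tendsto (contactPoint ν) (𝓝[<] (1 / 2)) (𝓝[>] 0) := by
  have hmem : ∀ᶠ lam in 𝓝[<] (1 / 2 : ℝ), lam ∈ Ioo (0 : ℝ) (1 / 2) :=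
    Ioo_mem_nhdsLT one_half_pos
  have hpos : ∀ᶠ lam in 𝓝[<] (1 / 2), 0 < contactPoint ν lam :=
    hmem.mono fun lam => contactPoint_pos hν
  refine tendsto_nhdsWithin_iff.mpr ⟨tendsto_order.mpr ⟨fun a ha => ?_, fun a ha => ?_⟩, hpos⟩
  · exact hpos.mono fun lam => ha.trans
  · filter_upwards [hmem, Ioo_mem_nhdsLT (tangencyParam_lt_half hν ha)] with lam hlam hτ
    refine lt_of_tangencyParam_lt hν ha ?_ ?_ <;> rw [tangencyParam_contactPoint hν hlam]
    exacts [hlam.1, hτ.1]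

lemma tendsto_optimalLevel_nhdsLT_half (hν : 0 ≤ ν) :
    Tendsto (optimalLevel ν) (𝓝[<] (1 / 2)) (𝓝 ((ν + 1) ^ 2)) := by
  have hp := tendsto_contactPoint_nhdsLT_half hν
  have hlam : Tendsto (fun lam : ℝ => lam) (𝓝[<] (1 / 2)) (𝓝 (1 / 2)) :=
    tendsto_id.mono_right nhdsWithin_le_nhds
  have hlim := (((((tendsto_besselLogDeriv_nhdsGT_zero (by linarith : -1 < ν)).comp hp).add_const
    (1 / 2)).add hlam).pow 2).sub ((hp.mono_right nhdsWithin_le_nhds).pow 2)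
  rwa [show (ν + 1 / 2 + 1 / 2) ^ 2 - 0 ^ 2 = (ν + 1) ^ 2 by ring] at hlim

lemma tendsto_contactPoint_nhdsGT_zero (hν : 1 / 2 ≤ ν) :
    Tendsto (contactPoint ν) (𝓝[>] 0) atTop := by
  have hν₀ : 0 ≤ ν := by linarith
  refine (atTop_basis_Ioi' 0).tendsto_right_iff.mpr fun M hM => ?_
  have hτ := tangencyParam_pos hν hM
  filter_upwards [Ioo_mem_nhdsGT hτ] with lam hlam
  have hlam' : lam ∈ Ioo (0 : ℝ) (1 / 2) := ⟨hlam.1, hlam.2.trans (tangencyParam_lt_half hν₀ hM)⟩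
  refine lt_of_tangencyParam_lt hν₀ (contactPoint_pos hν₀ hlam') hτ ?_
  rw [tangencyParam_contactPoint hν₀ hlam']
  exact hlam.2

lemma tendsto_optimalLevel_nhdsGT_zero (hν : 1 / 2 ≤ ν) :
    Tendsto (optimalLevel ν) (𝓝[>] 0) (𝓝 (ν ^ 2 - 1 / 4)) := by
  have hν₀ : 0 ≤ ν := by linarith
  have hmem : ∀ᶠ lam in 𝓝[>] (0 : ℝ), lam ∈ Ioo (0 : ℝ) (1 / 2) := Ioo_mem_nhdsGT one_half_pos
  refine tendsto_order.mpr ⟨fun a ha => hmem.mono fun lam hlam => ?_, fun b hb => ?_⟩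
  · have hp := contactPoint_pos hν₀ hlam
    exact (ha.trans (lt_contactLevel_zero hν hp)).trans
      (contactLevel_lt_contactLevel hν₀ hp le_rfl hlam.1)
  · obtain ⟨x, hx, hxb⟩ := exists_contactLevel_zero_lt hν hb
    have hcont : Continuous fun lam => contactLevel ν lam x := by
      unfold contactLevel
      fun_prop
    filter_upwards [hmem, nhdsWithin_le_nhds (hcont.continuousAt.eventually_lt_const hxb)]
      with lam hlam hlt
    exact (optimalLevel_le_contactLevel hν₀ hlam hx).trans_lt hlt

end Optimal

theorem best_lower_bound_I_general {ν : ℝ} (hν : 0 < ν) :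
    ∃ B X : ℝ → ℝ,
      (∀ lam ∈ Ioo (0 : ℝ) (1 / 2), 1 / 2 - lam ≤ ν →
        (∀ b, TouchesBelowI ν lam b ↔ b = B lam) ∧ TangentBelowI ν lam (B lam) (X lam)) ∧
      StrictMonoOn B (Ioo (0 : ℝ) (1 / 2)) ∧ StrictAntiOn X (Ioo (0 : ℝ) (1 / 2)) ∧
      Tendsto B (𝓝[<] (1 / 2)) (𝓝 ((ν + 1) ^ 2)) ∧ Tendsto X (𝓝[<] (1 / 2)) (𝓝 0) ∧
      (1 / 2 ≤ ν → Tendsto B (𝓝[>] 0) (𝓝 (ν ^ 2 - 1 / 4)) ∧ Tendsto X (𝓝[>] 0) atTop) :=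
  ⟨optimalLevel ν, contactPoint ν,
    fun _ hlam hν' => ⟨touchesBelowI_iff_eq_optimalLevel hlam hν',
      tangentBelowI_contactPoint hlam hν'⟩,
    strictMonoOn_optimalLevel hν.le, strictAntiOn_contactPoint hν.le,
    tendsto_optimalLevel_nhdsLT_half hν.le,
    (tendsto_contactPoint_nhdsLT_half hν.le).mono_right nhdsWithin_le_nhds,
    fun hν' => ⟨tendsto_optimalLevel_nhdsGT_zero hν', tendsto_contactPoint_nhdsGT_zero hν'⟩⟩

theorem best_lower_bound_I (ν : ℝ) :
    (∀ lam ∈ Ioo (0 : ℝ) (1 / 2), 1 / 2 - lam ≤ ν →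
      (∃! B : ℝ, TouchesBelowI ν lam B) ∧
      (∀ B : ℝ, TouchesBelowI ν lam B → ∃ xs : ℝ, TangentBelowI ν lam B xs)) ∧
    (1 / 2 ≤ ν →
      ∃ B X : ℝ → ℝ,
        (∀ lam ∈ Ioo (0 : ℝ) (1 / 2),
          TouchesBelowI ν lam (B lam) ∧ TangentBelowI ν lam (B lam) (X lam)) ∧
        StrictMonoOn B (Ioo (0 : ℝ) (1 / 2)) ∧
        StrictAntiOn X (Ioo (0 : ℝ) (1 / 2)) ∧
        Tendsto B (nhdsWithin 0 (Ioi 0)) (nhds (ν ^ 2 - 1 / 4)) ∧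
        Tendsto B (nhdsWithin (1 / 2) (Iio (1 / 2))) (nhds ((ν + 1) ^ 2)) ∧
        Tendsto X (nhdsWithin 0 (Ioi 0)) atTop ∧
        Tendsto X (nhdsWithin (1 / 2) (Iio (1 / 2))) (nhds 0)) := by
  refine ⟨fun lam hlam hν => ?_, fun hν => ?_⟩
  · obtain ⟨B, X, h, -⟩ := best_lower_bound_I_general (by linarith [hlam.2] : 0 < ν)
    obtain ⟨hB, hX⟩ := h lam hlam hν
    exact ⟨⟨B lam, (hB _).mpr rfl, fun b => (hB b).mp⟩, fun b hb => ⟨X lam, (hB b).mp hb ▸ hX⟩⟩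
  · obtain ⟨B, X, h, hBmono, hXanti, hB, hX, h₀⟩ :=
      best_lower_bound_I_general (by linarith : 0 < ν)
    refine ⟨B, X, fun lam hlam => ?_, hBmono, hXanti, (h₀ hν).1, hB, (h₀ hν).2, hX⟩
    obtain ⟨htouch, htangent⟩ := h lam hlam (by linarith [hlam.1])
    exact ⟨(htouch _).mpr rfl, htangent⟩
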